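/- For any positive integers l, m and n, the Toeplitz graph G_n(1^l 0^m), in which distinct vertices i < j of {1,…,n} are adjacent if and only if the representative of j−i modulo l+m in {1,…,l+m} is at most l, is word-representable. -/

import Mathlib

/-- Two letters `x` and `y` alternate in the word `w` if, after deleting all
letters other than `x` and `y`, consecutive letters always differ
(i.e. the restriction has the form `xyxy⋯` or `yxyx⋯`). -/
def Alternates {V : Type*} [DecidableEq V] (w : List V) (x y : V) : Prop :=
  (w.filter (fun z => z = x || z = y)).Chain' (· ≠ ·)

/-- A word `w` represents the graph `G`: every vertex occurs in `w`, and two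
distinct letters alternate in `w` iff they are adjacent in `G`. -/
def Represents {V : Type*} [DecidableEq V] (w : List V) (G : SimpleGraph V) : Prop :=
  (∀ v, v ∈ w) ∧ ∀ x y : V, x ≠ y → (Alternates w x y ↔ G.Adj x y)

/-- A graph is word-representable if some word represents it. -/
def WordRepresentable {V : Type*} [DecidableEq V] (G : SimpleGraph V) : Prop :=
  ∃ w : List V, Represents w G

/-- The representative of `d` modulo `m` taken in `{1, …, m}`. -/
def repMod (d m : ℕ) : ℕ := if d % m = 0 then m else d % m

/-- The Toeplitz graph `G_n(a₁ ⋯ a_m)` on vertex set `{1,…,n}` (encoded as `Fin n`,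
with `v : Fin n` standing for the label `v+1`): vertices `i < j` are adjacent iff
`a r = true` where `r ∈ {1,…,m}` is congruent to `j - i` modulo `m`. -/
def toeplitzGraph (n m : ℕ) (a : ℕ → Bool) : SimpleGraph (Fin n) :=
  SimpleGraph.fromRel (fun i j => (i : ℕ) < (j : ℕ) ∧ a (repMod ((j : ℕ) - (i : ℕ)) m) = true)

/-- The edges of `G`, directed from the smaller to the larger value of `f`. -/
def rankArc {V : Type*} (G : SimpleGraph V) (f : V → ℕ) (x y : V) : Prop :=
  G.Adj x y ∧ f x < f y

/-- Orienting `G` along `f` has no shortcuts: if `x → w` is an arc, then any two distinct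
vertices `y`, `z` on a directed path from `x` to `w` are joined by an arc. -/
def ShortcutFree {V : Type*} (G : SimpleGraph V) (f : V → ℕ) : Prop :=
  ∀ x y z w, rankArc G f x w → Relation.ReflTransGen (rankArc G f) x y →
    Relation.ReflTransGen (rankArc G f) y z → Relation.ReflTransGen (rankArc G f) z w →
    y ≠ z → rankArc G f y z

/-- The position of a vertex relative to a fixed vertex of an acyclic digraph. -/
inductive RelPos
  | self | inNbr | outNbr | ancestor | descendant | unrelated
  deriving DecidableEq

open Classical in
/-- The position of `x` relative to `v` in the orientation of `G` along `f`;
`ancestor` and `descendant` are reserved for vertices not adjacent to `v`. -/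
noncomputable def relPos {V : Type*} (G : SimpleGraph V) (f : V → ℕ) (v x : V) : RelPos :=
  if x = v then .self
  else if rankArc G f x v then .inNbr
  else if rankArc G f v x then .outNbr
  else if Relation.ReflTransGen (rankArc G f) x v then .ancestor
  else if Relation.ReflTransGen (rankArc G f) v x then .descendant
  else .unrelated

/-- The order in which the classes of vertices relative to `v` are listed in `localWord`. -/
def blockOrder : List RelPos :=
  [.ancestor, .inNbr, .unrelated, .ancestor, .self, .outNbr, .inNbr, .self, .descendant,
    .unrelated, .outNbr, .descendant]

/-- A word containing each letter of `L` twice, in which `v` does not alternate with its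
non-neighbours. -/
noncomputable def localWord {V : Type*} (G : SimpleGraph V) (f : V → ℕ) (L : List V) (v : V) :
    List V :=
  blockOrder.flatMap fun k => L.filter fun x => relPos G f v x = k

theorem alternates_iff_isChain {V : Type*} [DecidableEq V] {w : List V} {x y : V} :
    Alternates w x y ↔ (w.filter (fun z => z = x || z = y)).IsChain (· ≠ ·) :=
  Iff.rfl

theorem Alternates.symm {V : Type*} [DecidableEq V] {w : List V} {x y : V}
    (h : Alternates w x y) : Alternates w y x := by
  simpa only [Alternates, Bool.or_comm] using h

theorem List.exists_ranked_enumeration (V : Type*) [Fintype V] [DecidableEq V] (f : V → ℕ) :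
    ∃ L : List V, (∀ v, v ∈ L) ∧ L.Nodup ∧ L.Pairwise (fun x y => f x ≤ f y) := by
  refine ⟨Finset.univ.toList.mergeSort (fun x y => decide (f x ≤ f y)), by simp, ?_, ?_⟩
  · exact (List.mergeSort_perm _ _).nodup_iff.2 (Finset.nodup_toList _)
  · have h := List.pairwise_mergeSort (le := fun x y => decide (f x ≤ f y))
      (by simpa using fun a b c => le_trans) (by simpa using fun a b => le_total _ _)
      (Finset.univ : Finset V).toList
    simpa using h

theorem List.filter_pair_eq {V : Type*} [DecidableEq V] {L : List V} {x y : V}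
    (hL : L.Nodup) (hx : x ∈ L) (hy : y ∈ L) (hxy : x ≠ y) :
    L.filter (fun z => z = x || z = y) = [x, y] ∨
      L.filter (fun z => z = x || z = y) = [y, x] := by
  have hp : (L.filter (fun z => z = x || z = y)).Perm [x, y] := by
    rw [List.perm_ext_iff_of_nodup (hL.filter _) (by simpa using hxy)]
    intro a
    simp only [List.mem_filter, List.mem_cons, List.not_mem_nil, or_false, Bool.or_eq_true,
      decide_eq_true_eq, and_iff_right_iff_imp]
    rintro (rfl | rfl) <;> assumption
  generalize L.filter (fun z => z = x || z = y) = M at hp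
  obtain ⟨a, b, rfl⟩ := List.length_eq_two.1 (show M.length = 2 by simpa using hp.length_eq)
  have ha := hp.mem_iff (a := a)
  have hb := hp.mem_iff (a := b)
  have hn := hp.nodup_iff
  simp at ha hb hn
  grind

theorem List.filter_pair_eq_of_lt {V : Type*} [DecidableEq V] {f : V → ℕ} {L : List V} {x y : V}
    (hL : L.Nodup) (hf : L.Pairwise (fun x y => f x ≤ f y)) (hx : x ∈ L) (hy : y ∈ L)
    (hxy : f x < f y) : L.filter (fun z => z = x || z = y) = [x, y] := by
  refine (List.filter_pair_eq hL hx hy (by rintro rfl; omega)).resolve_right fun h => ?_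
  have := hf.filter (fun z => z = x || z = y)
  rw [h] at this
  simp at this
  omega

theorem filter_localWord {V : Type*} [DecidableEq V] (G : SimpleGraph V) (f : V → ℕ)
    (L : List V) (v : V) (p : V → Bool) :
    (localWord G f L v).filter p =
      blockOrder.flatMap fun k => (L.filter p).filter fun x => relPos G f v x = k := by
  simp only [localWord, List.filter_flatMap, List.filter_filter, Bool.and_comm]

theorem Relation.ReflTransGen.rank_lt {V : Type*} {G : SimpleGraph V} {f : V → ℕ} {x y : V}
    (h : Relation.ReflTransGen (rankArc G f) x y) : x = y ∨ f x < f y := by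
  induction h with
  | refl => exact .inl rfl
  | tail _ h ih =>
    rcases ih with rfl | ih
    · exact .inr h.2
    · exact .inr (ih.trans h.2)

/-- The word of a vertex alternates along every arc of a shortcut-free orientation. -/
theorem ShortcutFree.filter_localWord_of_rankArc {V : Type*} [DecidableEq V] {G : SimpleGraph V}
    {f : V → ℕ} (hG : ShortcutFree G f) {L : List V} (v : V) {x y : V} (h : rankArc G f x y)
    (hL : L.filter (fun z => z = x || z = y) = [x, y]) :
    (localWord G f L v).filter (fun z => z = x || z = y) = [x, y, x, y] := by
  have hne : x ≠ y := h.1.ne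
  rw [filter_localWord, hL]
  have hxy := Relation.ReflTransGen.single h
  have t1 : Relation.ReflTransGen (rankArc G f) y v → Relation.ReflTransGen (rankArc G f) x v :=
    hxy.trans
  have t2 : Relation.ReflTransGen (rankArc G f) v x → Relation.ReflTransGen (rankArc G f) v y :=
    fun h => h.trans hxy
  have t3 : Relation.ReflTransGen (rankArc G f) x v → Relation.ReflTransGen (rankArc G f) v y →
      (x ≠ v → rankArc G f x v) ∧ (v ≠ y → rankArc G f v y) :=
    fun a b => ⟨hG x x v y h .refl a b, hG x v y y h a b .refl⟩
  have t4 : rankArc G f x v → Relation.ReflTransGen (rankArc G f) y v → y ≠ v → rankArc G f y v :=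
    fun a b => hG x y v v a hxy b .refl
  have t5 : rankArc G f v y → Relation.ReflTransGen (rankArc G f) v x → v ≠ x → rankArc G f v x :=
    fun a b => hG v v x y a .refl b hxy
  have s : ∀ {a b}, rankArc G f a b → Relation.ReflTransGen (rankArc G f) a b :=
    fun h => .single h
  have as : ∀ {a b}, Relation.ReflTransGen (rankArc G f) a b →
      Relation.ReflTransGen (rankArc G f) b a → a = b := by
    intro a b h₁ h₂
    have := h₁.rank_lt
    have := h₂.rank_lt
    grind
  have key : (relPos G f v x, relPos G f v y) ∈ ([
      (.ancestor, .ancestor), (.ancestor, .inNbr), (.ancestor, .unrelated),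
      (.inNbr, .inNbr), (.inNbr, .unrelated), (.inNbr, .self), (.inNbr, .outNbr),
      (.self, .outNbr), (.outNbr, .outNbr), (.outNbr, .descendant),
      (.descendant, .descendant), (.unrelated, .unrelated), (.unrelated, .outNbr),
      (.unrelated, .descendant)] : List (RelPos × RelPos)) := by
    have s1 := @s x v
    have s2 := @s v x
    have s3 := @s y v
    have s4 := @s v y
    have a1 := @as x v
    have a2 := @as y v
    have r : Relation.ReflTransGen (rankArc G f) v v := .refl
    clear s as hL hG
    unfold relPos
    split_ifs <;> simp <;> grind
  generalize hx : relPos G f v x = a at key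
  generalize hy : relPos G f v y = b at key
  simp only [List.mem_cons, Prod.mk.injEq, List.not_mem_nil, or_false] at key
  rcases key with ⟨rfl, rfl⟩ | ⟨rfl, rfl⟩ | ⟨rfl, rfl⟩ | ⟨rfl, rfl⟩ | ⟨rfl, rfl⟩ | ⟨rfl, rfl⟩ |
    ⟨rfl, rfl⟩ | ⟨rfl, rfl⟩ | ⟨rfl, rfl⟩ | ⟨rfl, rfl⟩ | ⟨rfl, rfl⟩ | ⟨rfl, rfl⟩ | ⟨rfl, rfl⟩ |
    ⟨rfl, rfl⟩ <;> simp [blockOrder, List.filter_cons, hx, hy]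

/-- In its own word, a vertex does not alternate with its non-neighbours. -/
theorem not_alternates_localWord {V : Type*} [DecidableEq V] {G : SimpleGraph V}
    {f : V → ℕ} {L : List V} (hL : L.Nodup) {v x : V} (hv : v ∈ L) (hx : x ∈ L) (hvx : v ≠ x)
    (h : ¬ G.Adj v x) : ¬ Alternates (localWord G f L v) v x := by
  have h1 : ¬ rankArc G f v x := fun e => h e.1
  have h2 : ¬ rankArc G f x v := fun e => h e.1.symm
  have hpv : relPos G f v v = .self := by simp [relPos]
  have hpx : relPos G f v x = .ancestor ∨ relPos G f v x = .descendant ∨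
      relPos G f v x = .unrelated := by
    simp only [relPos, hvx.symm, h1, h2, if_false]
    split_ifs <;> simp
  rw [alternates_iff_isChain, filter_localWord]
  rcases List.filter_pair_eq hL hv hx hvx with e | e <;> rw [e] <;>
    rcases hpx with hp | hp | hp <;> simp [blockOrder, List.filter_cons, hpv, hp]

/-- A graph with a shortcut-free (semi-transitive) orientation is word-representable. -/
theorem ShortcutFree.wordRepresentable {V : Type*} [Fintype V] [DecidableEq V]
    {G : SimpleGraph V} {f : V → ℕ} (hG : ShortcutFree G f)
    (hf : ∀ x y, G.Adj x y → f x ≠ f y) : WordRepresentable G := by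
  obtain ⟨L, hmem, hnd, hL⟩ := List.exists_ranked_enumeration V f
  have halt : ∀ x y, rankArc G f x y → Alternates (L.flatMap (localWord G f L)) x y := by
    intro x y h
    have e := fun v => hG.filter_localWord_of_rankArc v h
      (List.filter_pair_eq_of_lt hnd hL (hmem x) (hmem y) h.2)
    simp only [alternates_iff_isChain, List.filter_flatMap, e]
    clear e hmem hnd hL
    induction L with
    | nil => simp
    | cons a L ih =>
      cases L <;> simp_all [h.1.ne, h.1.ne']
  refine ⟨L.flatMap (localWord G f L), fun v => ?_, fun x y hxy => ⟨fun h => ?_, fun h => ?_⟩⟩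
  · refine List.mem_flatMap.2 ⟨v, hmem v, List.mem_flatMap.2 ⟨.self, by simp [blockOrder], ?_⟩⟩
    simp [hmem v, relPos]
  · by_contra hadj
    refine not_alternates_localWord hnd (hmem x) (hmem y) hxy hadj (f := f) ?_
    exact h.infix ((List.infix_flatMap_of_mem (hmem x) _).filter _)
  · rcases lt_or_gt_of_ne (hf x y h) with hlt | hlt
    · exact halt x y ⟨h, hlt⟩
    · exact (halt y x ⟨h.symm, hlt⟩).symm

theorem Nat.sub_mod_eq_ite_of_le {a b : ℕ} (h : a ≤ b) {p : ℕ} (hp : 0 < p) :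
    (b - a) % p = if a % p ≤ b % p then b % p - a % p else b % p + p - a % p := by
  have ha := Nat.div_add_mod a p
  have hb := Nat.div_add_mod b p
  have ha' := Nat.mod_lt a hp
  have hb' := Nat.mod_lt b hp
  have hd : a / p ≤ b / p := Nat.div_le_div_right h
  split_ifs with hr
  · have e : b - a = (b % p - a % p) + p * (b / p - a / p) := by
      zify [h, hr, hd] at *
      linear_combination ha - hb
    rw [e, Nat.add_mul_mod_self_left, Nat.mod_eq_of_lt (by omega)]
  · have hd' : a / p + 1 ≤ b / p := by
      by_contra hc
      rw [show b / p = a / p by omega] at hb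
      omega
    have hr' : a % p ≤ b % p + p := by omega
    have e : b - a = (b % p + p - a % p) + p * (b / p - (a / p + 1)) := by
      zify [h, hr', hd'] at *
      linear_combination ha - hb
    rw [e, Nat.add_mul_mod_self_left, Nat.mod_eq_of_lt (by omega)]

theorem toeplitzGraph_adj_iff_of_lt {l m n : ℕ} (hm : 0 < m) {i j : Fin n} (hij : i < j) :
    (toeplitzGraph n (l + m) (fun r => decide (1 ≤ r ∧ r ≤ l))).Adj i j ↔
      ((i : ℕ) % (l + m) < (j : ℕ) % (l + m) ∧ (j : ℕ) % (l + m) ≤ (i : ℕ) % (l + m) + l) ∨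
      ((j : ℕ) % (l + m) < (i : ℕ) % (l + m) ∧ (j : ℕ) % (l + m) + m ≤ (i : ℕ) % (l + m)) := by
  have hij' : (i : ℕ) < j := hij
  have e := Nat.sub_mod_eq_ite_of_le hij'.le (p := l + m) (by omega)
  have hi := Nat.mod_lt (i : ℕ) (show 0 < l + m by omega)
  have hj := Nat.mod_lt (j : ℕ) (show 0 < l + m by omega)
  simp only [toeplitzGraph, SimpleGraph.fromRel_adj, repMod, hij'.not_gt, hij', hij.ne, ne_eq,
    not_false_eq_true, true_and, false_and, or_false, decide_eq_true_eq, e]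
  split_ifs <;> omega

/-- Adjacency in the Toeplitz graph of `1^l 0^m`, for vertices with increasing residues. -/
theorem toeplitzGraph_adj_iff {l m n : ℕ} (hm : 0 < m) {i j : Fin n}
    (hij : (i : ℕ) % (l + m) < (j : ℕ) % (l + m)) :
    (toeplitzGraph n (l + m) (fun r => decide (1 ≤ r ∧ r ≤ l))).Adj i j ↔
      ((j : ℕ) % (l + m) ≤ (i : ℕ) % (l + m) + l ∧ (i : ℕ) / (l + m) ≤ (j : ℕ) / (l + m)) ∨
      ((i : ℕ) % (l + m) + m ≤ (j : ℕ) % (l + m) ∧ (j : ℕ) / (l + m) < (i : ℕ) / (l + m)) := by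
  rcases lt_trichotomy i j with h | rfl | h
  · rw [toeplitzGraph_adj_iff_of_lt hm h]
    have : (i : ℕ) / (l + m) ≤ (j : ℕ) / (l + m) := Nat.div_le_div_right h.le
    omega
  · omega
  · rw [SimpleGraph.adj_comm, toeplitzGraph_adj_iff_of_lt hm h]
    have : (j : ℕ) / (l + m) < (i : ℕ) / (l + m) := by
      refine lt_of_le_of_ne (Nat.div_le_div_right h.le) fun e => ?_
      have hi := Nat.div_add_mod (i : ℕ) (l + m)
      have hj := Nat.div_add_mod (j : ℕ) (l + m)
      rw [e] at hj
      have : (j : ℕ) < i := h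
      omega
    omega

theorem toeplitzGraph_mod_ne {l m n : ℕ} (hm : 0 < m) {i j : Fin n}
    (h : (toeplitzGraph n (l + m) (fun r => decide (1 ≤ r ∧ r ≤ l))).Adj i j) :
    (i : ℕ) % (l + m) ≠ (j : ℕ) % (l + m) := by
  rcases lt_or_gt_of_ne h.ne with hlt | hlt
  · have := (toeplitzGraph_adj_iff_of_lt hm hlt).1 h
    omega
  · have := (toeplitzGraph_adj_iff_of_lt hm hlt).1 h.symm
    omega

theorem toeplitzGraph_shortcutFree (l m n : ℕ) (hm : 0 < m) :
    ShortcutFree (toeplitzGraph n (l + m) (fun r => decide (1 ≤ r ∧ r ≤ l)))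
      (fun i => (i : ℕ) % (l + m)) := by
  set G := toeplitzGraph n (l + m) (fun r => decide (1 ≤ r ∧ r ≤ l))
  have hpath : ∀ x y, Relation.ReflTransGen (rankArc G fun i => (i : ℕ) % (l + m)) x y →
      (x : ℕ) % (l + m) ≤ (y : ℕ) % (l + m) ∧
        ((y : ℕ) % (l + m) < (x : ℕ) % (l + m) + m → (x : ℕ) / (l + m) ≤ (y : ℕ) / (l + m)) := by
    intro x y h
    induction h with
    | refl => simp
    | tail _ h ih =>
      have := (toeplitzGraph_adj_iff hm h.2).1 h.1
      have := h.2
      grind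
  rintro x y z w ⟨hxw, hlt⟩ hxy hyz hzw hne
  have hlt' := hyz.rank_lt.resolve_left hne
  refine ⟨(toeplitzGraph_adj_iff hm hlt').2 ?_, hlt'⟩
  have h0 := (toeplitzGraph_adj_iff hm hlt).1 hxw
  have h1 := hpath _ _ hxy
  have h2 := hpath _ _ hyz
  have h3 := hpath _ _ hzw
  have h4 := Nat.mod_lt (w : ℕ) (show 0 < l + m by omega)
  simp only at hlt hlt'
  omega

/-- The Toeplitz graph G_n(1^l 0^m): vertices i < j are adjacent iff the
representative of j − i modulo l+m taken in {1,...,l+m} is at most l.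
It is word-representable. -/
theorem toeplitz_1l0m_word_representable (l m n : ℕ)
    (hl : 0 < l) (hm : 0 < m) (hn : 0 < n) :
    WordRepresentable (toeplitzGraph n (l + m)
      (fun r => decide (1 ≤ r ∧ r ≤ l))) := by
  exact (toeplitzGraph_shortcutFree l m n hm).wordRepresentable
    fun _ _ h => toeplitzGraph_mod_ne hm h
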